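/- Let n ≥ 3 and let Ω be a convex compact subset of ℝⁿ with nonempty interior and smooth boundary. Then for every x ∈ ℝⁿ, ∫_{∂Ω}|x−y|^{2−n} (dσ(y)/σ_{n−1}) ≤ (n−1)·(area(∂Ω)/σ_{n−1})^{1/(n−1)}, where the integral is with respect to the (n−1)-dimensional Hausdorff measure σ on ∂Ω. -/

import Mathlib

open MeasureTheory Metric Set Filter

/-- The variational `p`-capacity of a set `Ω ⊆ ℝⁿ`:
`cap_p(Ω) = inf {∫ |∇f|^p : f ∈ C_c^∞(ℝⁿ), f ≥ 1 on Ω}`. -/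
noncomputable def pCap (n : ℕ) (p : ℝ) (Ω : Set (EuclideanSpace ℝ (Fin n))) : ℝ :=
  sInf { E : ℝ | ∃ f : EuclideanSpace ℝ (Fin n) → ℝ, ContDiff ℝ (⊤ : ℕ∞) f ∧ HasCompactSupport f ∧
      (∀ x ∈ Ω, 1 ≤ f x) ∧ E = ∫ x, ‖fderiv ℝ f x‖ ^ p }

/-- `σ_{n-1}`: the `(n-1)`-dimensional Hausdorff measure of the unit sphere in `ℝⁿ`. -/
noncomputable def sphereArea (n : ℕ) : ℝ :=
  ((μH[(n : ℝ) - 1] : Measure (EuclideanSpace ℝ (Fin n)))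
    (Metric.sphere (0 : EuclideanSpace ℝ (Fin n)) 1)).toReal

/-- The `(n-1)`-dimensional Hausdorff measure (surface area) of a set in `ℝⁿ`. -/
noncomputable def area (n : ℕ) (s : Set (EuclideanSpace ℝ (Fin n))) : ℝ :=
  ((μH[(n : ℝ) - 1] : Measure (EuclideanSpace ℝ (Fin n))) s).toReal

/-- A set `Ω ⊆ ℝⁿ` has smooth (C^∞) boundary: near each boundary point, the
boundary is the regular zero set of a smooth real-valued function. -/
def HasSmoothBoundary (n : ℕ) (Ω : Set (EuclideanSpace ℝ (Fin n))) : Prop :=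
  ∀ x ∈ frontier Ω, ∃ (U : Set (EuclideanSpace ℝ (Fin n))) (f : EuclideanSpace ℝ (Fin n) → ℝ),
    IsOpen U ∧ x ∈ U ∧ ContDiff ℝ (⊤ : ℕ∞) f ∧ (∀ y ∈ U, fderiv ℝ f y ≠ 0) ∧
    U ∩ frontier Ω = U ∩ f ⁻¹' {0}

section ConvexProjection

variable {E : Type*} [NormedAddCommGroup E] [InnerProductSpace ℝ E]

/-- A map satisfying the variational inequality characterizing the nearest point projection onto
`K` is `1`-Lipschitz. -/
lemma lipschitzWith_one_of_inner_le_zero {K : Set E} {P : E → E}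
    (hP : ∀ u, P u ∈ K ∧ ∀ w ∈ K, inner ℝ (u - P u) (w - P u) ≤ 0) : LipschitzWith 1 P := by
  refine LipschitzWith.of_dist_le_mul fun u v => ?_
  have h1 := (hP u).2 _ (hP v).1
  have h2 := (hP v).2 _ (hP u).1
  have h3 : ‖P u - P v‖ ^ 2 ≤ inner ℝ (u - v) (P u - P v) := by
    rw [← real_inner_self_eq_norm_sq]
    simp only [inner_sub_left, inner_sub_right] at h1 h2 ⊢
    rw [real_inner_comm (P u) (P v)] at *
    linarith
  have h4 := real_inner_le_norm (u - v) (P u - P v)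
  rw [dist_eq_norm, dist_eq_norm, NNReal.coe_one, one_mul]
  by_contra! h
  nlinarith [norm_nonneg (u - v), norm_nonneg (P u - P v)]

/-- The nearest point projection onto a nonempty complete convex set. -/
lemma exists_projection_of_complete_convex {K : Set E} (hne : K.Nonempty) (hK : IsComplete K)
    (hconv : Convex ℝ K) :
    ∃ P : E → E, ∀ u, P u ∈ K ∧ ∀ w ∈ K, inner ℝ (u - P u) (w - P u) ≤ 0 := by
  have h : ∀ u : E, ∃ p, p ∈ K ∧ ∀ w ∈ K, inner ℝ (u - p) (w - p) ≤ 0 := fun u => by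
    obtain ⟨p, hp, hpe⟩ := exists_norm_eq_iInf_of_complete_convex hne hK hconv u
    exact ⟨p, hp, (norm_eq_iInf_iff_real_inner_le_zero hconv hp).1 hpe⟩
  choose P hP using h
  exact ⟨P, hP⟩

/-- A convex set with nonempty interior has an outer normal at each frontier point. -/
lemma exists_outer_normal_of_mem_frontier [CompleteSpace E] {K : Set E} (hconv : Convex ℝ K)
    (hint : (interior K).Nonempty) {y : E} (hy : y ∈ frontier K) :
    ∃ v : E, v ≠ 0 ∧ ∀ w ∈ K, inner ℝ v (w - y) ≤ 0 := by
  obtain ⟨f, hf⟩ := geometric_hahn_banach_open_point hconv.interior isOpen_interior hy.2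
  refine ⟨(InnerProductSpace.toDual ℝ E).symm f, ?_, fun w hw => ?_⟩
  · rintro h0
    obtain ⟨z, hz⟩ := hint
    have : f = 0 := by simpa using h0
    simpa [this] using hf z hz
  · rw [InnerProductSpace.toDual_symm_apply, map_sub, sub_nonpos]
    have hw' : w ∈ closure (interior K) := by
      rw [hconv.closure_interior_eq_closure_of_nonempty_interior hint]
      exact subset_closure hw
    exact closure_minimal (fun z hz => (hf z hz).le) (isClosed_le f.continuous continuous_const) hw'

/-- A ray issuing from a closed ball meets the bounding sphere. -/
lemma exists_add_smul_mem_sphere {x y v : E} {r : ℝ} (hy : y ∈ closedBall x r) (hv : v ≠ 0) :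
    ∃ t : ℝ, 0 ≤ t ∧ y + t • v ∈ sphere x r := by
  have hv' : 0 < ‖v‖ := norm_pos_iff.2 hv
  rw [mem_closedBall, dist_eq_norm] at hy
  have hr : 0 ≤ r := (norm_nonneg _).trans hy
  have hT : 0 ≤ (r + ‖y - x‖) / ‖v‖ := by positivity
  have hcont : ContinuousOn (fun t : ℝ => ‖y + t • v - x‖) (Icc 0 ((r + ‖y - x‖) / ‖v‖)) := by
    fun_prop
  have hend : r ≤ ‖y + ((r + ‖y - x‖) / ‖v‖) • v - x‖ := by
    have h1 := norm_sub_norm_le (((r + ‖y - x‖) / ‖v‖) • v) (-(y - x))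
    rw [norm_smul, Real.norm_of_nonneg hT, div_mul_cancel₀ _ hv'.ne', norm_neg] at h1
    calc r = r + ‖y - x‖ - ‖y - x‖ := by ring
      _ ≤ _ := h1
      _ = _ := by congr 1; abel
  obtain ⟨t, ht, hte⟩ := intermediate_value_Icc hT hcont ⟨by simpa using hy, hend⟩
  exact ⟨t, ht.1, by rw [mem_sphere, dist_eq_norm]; exact hte⟩

/-- The part of the frontier of a convex body lying in a ball has Hausdorff measure at most that
of the bounding sphere. -/
lemma hausdorffMeasure_frontier_inter_closedBall_le [CompleteSpace E] [MeasurableSpace E]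
    [BorelSpace E] {K : Set E} (hconv : Convex ℝ K) (hclosed : IsClosed K)
    (hint : (interior K).Nonempty) {d : ℝ} (hd : 0 ≤ d) (x : E) (r : ℝ) :
    μH[d] (frontier K ∩ closedBall x r) ≤ μH[d] (sphere x r) := by
  obtain ⟨P, hP⟩ := exists_projection_of_complete_convex (hint.mono interior_subset)
    hclosed.isComplete hconv
  have hsub : frontier K ∩ closedBall x r ⊆ P '' sphere x r := by
    rintro y ⟨hy, hyr⟩
    have hyK : y ∈ K := hclosed.frontier_subset hy
    obtain ⟨v, hv, hvK⟩ := exists_outer_normal_of_mem_frontier hconv hint hy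
    obtain ⟨t, ht, hts⟩ := exists_add_smul_mem_sphere hyr hv
    refine ⟨_, hts, ?_⟩
    have h1 := (hP (y + t • v)).2 y hyK
    have h2 := mul_nonpos_of_nonneg_of_nonpos ht (hvK _ (hP (y + t • v)).1)
    set p := P (y + t • v)
    have h3 : inner ℝ (y - p) (y - p) ≤ (0 : ℝ) := by
      have e : y + t • v - p = (y - p) + t • v := by abel
      have e' : inner ℝ v (y - p) = -inner ℝ v (p - y) := by rw [← inner_neg_right, neg_sub]
      rw [e, inner_add_left, real_inner_smul_left, e'] at h1
      linarith
    exact (sub_eq_zero.1 (inner_self_eq_zero.1 (h3.antisymm real_inner_self_nonneg))).symm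
  calc μH[d] (frontier K ∩ closedBall x r) ≤ μH[d] (P '' sphere x r) := measure_mono hsub
    _ ≤ _ := by
      simpa using (lipschitzWith_one_of_inner_le_zero hP).hausdorffMeasure_image_le hd (sphere x r)

/-- Scaling of the Hausdorff measure of spheres. -/
lemma hausdorffMeasure_sphere_le [MeasurableSpace E] [BorelSpace E] {d : ℝ} (hd : 0 ≤ d) (x : E)
    {r : ℝ} (hr : 0 < r) :
    μH[d] (sphere x r) ≤ ENNReal.ofReal (r ^ d) * μH[d] (sphere (0 : E) 1) := by
  have hL : LipschitzWith r.toNNReal (fun z : E => x + r • z) := by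
    refine LipschitzWith.of_dist_le_mul fun u v => ?_
    rw [dist_add_left, dist_smul₀, Real.norm_of_nonneg hr.le, Real.coe_toNNReal _ hr.le]
  have hsub : sphere x r ⊆ (fun z : E => x + r • z) '' sphere (0 : E) 1 := by
    intro y hy
    rw [mem_sphere, dist_eq_norm] at hy
    refine ⟨r⁻¹ • (y - x), ?_, ?_⟩
    · rw [mem_sphere_zero_iff_norm, norm_smul, hy, norm_inv, Real.norm_of_nonneg hr.le,
        inv_mul_cancel₀ hr.ne']
    · simp [smul_smul, mul_inv_cancel₀ hr.ne']
  refine (measure_mono hsub).trans ((hL.hausdorffMeasure_image_le hd _).trans_eq ?_)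
  rw [← ENNReal.ofReal_rpow_of_pos hr]
  rfl

end ConvexProjection

/-- A potential estimate for a finite measure whose mass of balls centred at `x` is controlled. -/
lemma integral_norm_sub_rpow_le {E : Type*} [NormedAddCommGroup E] [MeasurableSpace E]
    [BorelSpace E] [SecondCountableTopology E] {μ : Measure E} {x : E} {m s R : ℝ} (hm : 2 < m)
    (hs : 0 ≤ s) (hR : 0 < R) (huniv : μ univ ≤ ENNReal.ofReal (s * R ^ (m - 1)))
    (hball : ∀ r, 0 < r → μ (closedBall x r) ≤ ENNReal.ofReal (s * r ^ (m - 1))) :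
    ∫ y, ‖x - y‖ ^ (2 - m) ∂μ ≤ (m - 1) * s * R := by
  have hm2 : 0 < m - 2 := by linarith
  have hm1 : 0 < m - 1 := by linarith
  have hmeas : Measurable fun y : E => ‖x - y‖ ^ (2 - m) := by fun_prop
  have hnn : ∀ y : E, 0 ≤ ‖x - y‖ ^ (2 - m) := fun y => by positivity
  rw [integral_eq_lintegral_of_nonneg_ae (ae_of_all _ hnn) hmeas.aestronglyMeasurable]
  refine ENNReal.toReal_le_of_le_ofReal (by positivity) ?_
  rw [lintegral_eq_lintegral_meas_lt μ (ae_of_all _ hnn) hmeas.aemeasurable]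
  set T : ℝ := R ^ (2 - m) with hT
  have hTpos : 0 < T := Real.rpow_pos_of_pos hR _
  set q : ℝ := -((m - 1) / (m - 2)) with hq
  have hq1 : q < -1 := by
    rw [hq, neg_lt_neg_iff, lt_div_iff₀ hm2]
    linarith
  have htail : ∀ t ∈ Ioi T, μ {y | t < ‖x - y‖ ^ (2 - m)} ≤ ENNReal.ofReal (s * t ^ q) := by
    intro t ht
    have ht0 : 0 < t := hTpos.trans ht
    have hr0 : 0 < t ^ (2 - m)⁻¹ := Real.rpow_pos_of_pos ht0 _
    have e : (t ^ (2 - m)⁻¹) ^ (m - 1) = t ^ q := by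
      rw [← Real.rpow_mul ht0.le]
      congr 1
      have : 2 - m ≠ 0 := by linarith
      rw [hq]
      field_simp
      ring
    rw [← e]
    refine (measure_mono fun y hy => ?_).trans (hball _ hr0)
    rw [mem_ofPred_eq] at hy
    rw [mem_closedBall, dist_comm, dist_eq_norm]
    by_contra! h
    have h1 := Real.rpow_lt_rpow_of_neg hr0 h (by linarith : 2 - m < 0)
    rw [← Real.rpow_mul ht0.le, inv_mul_cancel₀ (by linarith), Real.rpow_one] at h1
    linarith
  have hint : IntegrableOn (fun t : ℝ => s * t ^ q) (Ioi T) :=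
    (integrableOn_Ioi_rpow_of_lt hq1 hTpos).const_mul s
  have hpos : ∀ t ∈ Ioi T, 0 ≤ s * t ^ q := fun t ht =>
    mul_nonneg hs (Real.rpow_nonneg (hTpos.trans ht).le _)
  have hval : ∫ t in Ioi T, s * t ^ q = (m - 2) * s * R := by
    rw [integral_const_mul, integral_Ioi_rpow_of_lt hq1 hTpos]
    have e : T ^ (q + 1) = R := by
      rw [hT, ← Real.rpow_mul hR.le]
      have : (2 - m) * (q + 1) = 1 := by
        rw [hq]
        field_simp
        ring
      rw [this, Real.rpow_one]
    have e' : q + 1 = -(m - 2)⁻¹ := by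
      rw [hq]
      field_simp
      ring
    rw [e, e']
    field_simp
  have hhead : s * R ^ (m - 1) * T = s * R := by
    rw [hT, mul_assoc, ← Real.rpow_add hR]
    norm_num
  rw [← Ioc_union_Ioi_eq_Ioi hTpos.le,
    lintegral_union measurableSet_Ioi (Ioc_disjoint_Ioi le_rfl)]
  calc _ ≤ ENNReal.ofReal (s * R) + ENNReal.ofReal ((m - 2) * s * R) := by
        refine add_le_add ?_ ?_
        · calc _ ≤ ∫⁻ _ in Ioc 0 T, ENNReal.ofReal (s * R ^ (m - 1)) :=
                lintegral_mono fun t => (measure_mono (subset_univ _)).trans huniv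
            _ = ENNReal.ofReal (s * R) := by
              rw [setLIntegral_const, Real.volume_Ioc, sub_zero,
                ← ENNReal.ofReal_mul (by positivity), hhead]
        · calc _ ≤ ∫⁻ t in Ioi T, ENNReal.ofReal (s * t ^ q) :=
                setLIntegral_mono' measurableSet_Ioi htail
            _ = ENNReal.ofReal ((m - 2) * s * R) := by
              rw [← hval, ofReal_integral_eq_lintegral_ofReal hint
                ((ae_restrict_iff' measurableSet_Ioi).2 (ae_of_all _ hpos))]
    _ = ENNReal.ofReal ((m - 1) * s * R) := by
        rw [← ENNReal.ofReal_add (by positivity) (by positivity)]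
        congr 1
        ring

/-- Inequality (2.4): the normalized Newtonian potential of the boundary surface
measure of a smooth convex body is bounded by `(n-1)·(area(∂Ω)/σ_{n-1})^{1/(n-1)}`. -/
theorem boundary_potential_le
    (n : ℕ) (hn : 3 ≤ n)
    (Ω : Set (EuclideanSpace ℝ (Fin n))) (hconv : Convex ℝ Ω) (hcomp : IsCompact Ω)
    (hint : (interior Ω).Nonempty) (hsm : HasSmoothBoundary n Ω)
    (x : EuclideanSpace ℝ (Fin n)) :
    (∫ y in frontier Ω, ‖x - y‖ ^ ((2 : ℝ) - (n : ℝ))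
        ∂(μH[(n : ℝ) - 1] : Measure (EuclideanSpace ℝ (Fin n)))) / sphereArea n
      ≤ ((n : ℝ) - 1) * (area n (frontier Ω) / sphereArea n) ^ ((1 : ℝ) / ((n : ℝ) - 1)) := by
  have hn' : (3 : ℝ) ≤ n := by exact_mod_cast hn
  have hd : (0 : ℝ) ≤ (n : ℝ) - 1 := by linarith
  have hs_nonneg : 0 ≤ sphereArea n := ENNReal.toReal_nonneg
  have hA_nonneg : 0 ≤ area n (frontier Ω) := ENNReal.toReal_nonneg
  rcases hs_nonneg.eq_or_lt with hs0 | hs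
  · simp only [← hs0, div_zero]
    exact mul_nonneg hd (Real.rpow_nonneg le_rfl _)
  have htop : μH[(n : ℝ) - 1] (sphere (0 : EuclideanSpace ℝ (Fin n)) 1) ≠ ⊤ := by
    intro h
    simp [sphereArea, h] at hs
  have hball : ∀ r, 0 < r → μH[(n : ℝ) - 1] (frontier Ω ∩ closedBall x r) ≤
      ENNReal.ofReal (sphereArea n * r ^ ((n : ℝ) - 1)) := fun r hr => by
    refine ((hausdorffMeasure_frontier_inter_closedBall_le hconv hcomp.isClosed hint hd x r).trans
      (hausdorffMeasure_sphere_le hd x hr)).trans_eq ?_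
    rw [mul_comm, ENNReal.ofReal_mul hs.le, sphereArea, ENNReal.ofReal_toReal htop]
  have hfin : μH[(n : ℝ) - 1] (frontier Ω) ≠ ⊤ := by
    obtain ⟨r, hr0, hr⟩ := hcomp.isBounded.subset_closedBall_lt 0 x
    have := hball r hr0
    rw [inter_eq_left.2 (hcomp.isClosed.frontier_subset.trans hr)] at this
    exact ne_top_of_le_ne_top ENNReal.ofReal_ne_top this
  rcases hA_nonneg.eq_or_lt with hA0 | hA
  · have hzero : μH[(n : ℝ) - 1] (frontier Ω) = 0 :=
      ((ENNReal.toReal_eq_zero_iff _).1 hA0.symm).resolve_right hfin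
    rw [Measure.restrict_eq_zero.2 hzero, integral_zero_measure, zero_div, ← hA0, zero_div]
    exact mul_nonneg hd (Real.rpow_nonneg le_rfl _)
  set R : ℝ := (area n (frontier Ω) / sphereArea n) ^ ((1 : ℝ) / ((n : ℝ) - 1)) with hRdef
  have hR : 0 < R := Real.rpow_pos_of_pos (div_pos hA hs) _
  have hRA : sphereArea n * R ^ ((n : ℝ) - 1) = area n (frontier Ω) := by
    rw [hRdef, ← Real.rpow_mul (div_pos hA hs).le, one_div_mul_cancel (by linarith), Real.rpow_one,
      mul_div_cancel₀ _ hs.ne']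
  rw [div_le_iff₀ hs]
  refine (integral_norm_sub_rpow_le (by linarith) hs.le hR ?_ fun r hr => ?_).trans_eq (by ring)
  · rw [Measure.restrict_apply_univ, hRA, area, ENNReal.ofReal_toReal hfin]
  · rw [Measure.restrict_apply measurableSet_closedBall, inter_comm]
    exact hball r hr
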